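/- arXiv:2110.09069 — 5 statements merged into one kernel-verified Lean document; each statement's English description precedes it below -/
import Mathlib

section
/- Let V be a finite set with |V| ≥ 1, let w : V → V → ℝ≥0 satisfy w(x,x) = 0 for all x ∈ V, let u ∈ V, let d ≥ 2 be an integer and let S ⊆ V be nonempty. Then f(S, u, d) equals the minimum of the (finite, nonempty) set { w(u,v) + f(S \ {u}, v, d−1) : v ∈ V } ∪ { f(S', u, d) + f(S \ S', u, d) : ∅ ≠ S' ⊊ S }. -/
open scoped NNReal

/-- An arc set `A ⊆ V × V` covers `(S, u, d)` if every vertex of `S` is reachable from `u`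
by a directed walk of length at most `d` all of whose arcs belong to `A`. -/
def Covers {V : Type*} (A : Set (V × V)) (S : Set V) (u : V) (d : ℕ) : Prop :=
  ∀ v ∈ S, ∃ n ≤ d, ∃ p : ℕ → V, p 0 = u ∧ p n = v ∧ ∀ i < n, (p i, p (i + 1)) ∈ A

/-- `steinerF w S u d` is the minimum of `∑_{(x,y) ∈ A} w x y` over all arc sets
`A ⊆ V × V` covering `(S, u, d)`. -/
noncomputable def steinerF {V : Type*} [Fintype V] (w : V → V → ℝ≥0)
    (S : Finset V) (u : V) (d : ℕ) : ℝ≥0 :=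
  sInf {c : ℝ≥0 | ∃ A : Finset (V × V), Covers (↑A) (↑S) u d ∧ c = ∑ a ∈ A, w a.1 a.2}

/-- There is a walk of length exactly `n` from `u` to `v` with arcs in `A`. -/
def HasWalk {V : Type*} (A : Set (V × V)) (u : V) (n : ℕ) (v : V) : Prop :=
  ∃ p : ℕ → V, p 0 = u ∧ p n = v ∧ ∀ i < n, (p i, p (i + 1)) ∈ A

theorem HasWalk.refl {V : Type*} (A : Set (V × V)) (u : V) : HasWalk A u 0 u :=
  ⟨fun _ => u, rfl, rfl, fun i hi => absurd hi (Nat.not_lt_zero i)⟩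

theorem HasWalk.eq_of_zero {V : Type*} {A : Set (V × V)} {u v : V} (h : HasWalk A u 0 v) :
    v = u := by
  obtain ⟨p, h0, h1, _⟩ := h
  rw [← h0, ← h1]

theorem HasWalk.mono {V : Type*} {A B : Set (V × V)} (hAB : A ⊆ B) {u v : V} {n : ℕ}
    (h : HasWalk A u n v) : HasWalk B u n v := by
  obtain ⟨p, h0, h1, h2⟩ := h
  exact ⟨p, h0, h1, fun i hi => hAB (h2 i hi)⟩

theorem HasWalk.cons {V : Type*} {A : Set (V × V)} {u v x : V} {n : ℕ}
    (ha : (u, v) ∈ A) (h : HasWalk A v n x) : HasWalk A u (n + 1) x := by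
  obtain ⟨p, h0, h1, h2⟩ := h
  refine ⟨fun i => Nat.casesOn i u p, rfl, h1, ?_⟩
  intro i hi
  cases i with
  | zero => simpa [h0] using ha
  | succ j => exact h2 j (by omega)

theorem HasWalk.snoc {V : Type*} {A : Set (V × V)} {u v x : V} {n : ℕ}
    (h : HasWalk A u n v) (ha : (v, x) ∈ A) : HasWalk A u (n + 1) x := by
  obtain ⟨p, h0, h1, h2⟩ := h
  refine ⟨fun i => if i ≤ n then p i else x, by simp [h0], by simp, ?_⟩
  intro i hi
  rcases Nat.lt_or_ge i n with h | h
  · have e1 : i ≤ n := by omega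
    have e2 : i + 1 ≤ n := by omega
    simpa [e1, e2] using h2 i h
  · have : i = n := by omega
    subst this
    simpa [h1] using ha

theorem HasWalk.unsnoc {V : Type*} {A : Set (V × V)} {u x : V} {n : ℕ}
    (h : HasWalk A u (n + 1) x) : ∃ y, HasWalk A u n y ∧ (y, x) ∈ A := by
  obtain ⟨p, h0, h1, h2⟩ := h
  refine ⟨p n, ⟨p, h0, rfl, fun i hi => h2 i (by omega)⟩, ?_⟩
  rw [← h1]
  exact h2 n (by omega)

/-- The branch of a breadth-first tree: every reachable vertex gets labelled by the child of the
root through which it is reached. -/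
theorem exists_branch {V : Type*} (A : Set (V × V)) (u : V) :
    ∃ l : V → V, ∀ x, x ≠ u → ∀ n, HasWalk A u n x →
      ∃ m, m + 1 ≤ n ∧ (u, l x) ∈ A ∧ l (l x) = l x ∧
        HasWalk {a | a ∈ A ∧ a.1 ≠ u ∧ l a.2 = l x} (l x) m x := by
  classical
  let h : V → ℕ := fun x => sInf {n | HasWalk A u n x}
  have hle : ∀ x n, HasWalk A u n x → h x ≤ n := fun x n hx => Nat.sInf_le hx
  have hmem : ∀ x n, HasWalk A u n x → HasWalk A u (h x) x := fun x n hx =>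
    Nat.sInf_mem (s := {n | HasWalk A u n x}) ⟨n, hx⟩
  have hpar : ∀ x, ∃ y, ∀ n, HasWalk A u (n + 1) x → h x = n + 1 →
      HasWalk A u n y ∧ h y = n ∧ (y, x) ∈ A := by
    intro x
    by_cases hx : ∃ n, HasWalk A u (n + 1) x ∧ h x = n + 1
    · obtain ⟨n, hn, hhn⟩ := hx
      obtain ⟨y, hy, hyx⟩ := hn.unsnoc
      refine ⟨y, fun m _ hm => ?_⟩
      have : m = n := by omega
      subst this
      refine ⟨hy, ?_, hyx⟩
      have h1 := hle y m hy
      have h2 := hle x _ ((hmem y m hy).snoc hyx)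
      omega
    · exact ⟨x, fun n h1 h2 => absurd ⟨n, h1, h2⟩ hx⟩
  choose par hpar using hpar
  let l : V → V := fun x => par^[h x - 1] x
  have hu : h u = 0 := Nat.le_zero.mp (hle u 0 (HasWalk.refl A u))
  have key : ∀ m x, HasWalk A u (m + 1) x → h x = m + 1 →
      (u, l x) ∈ A ∧ l (l x) = l x ∧
        HasWalk {a | a ∈ A ∧ a.1 ≠ u ∧ l a.2 = l x} (l x) m x := by
    intro m
    induction m with
    | zero =>
      intro x hx hhx
      obtain ⟨h1, -, h3⟩ := hpar x 0 hx hhx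
      have hlx : l x = x := by simp [l, hhx]
      rw [h1.eq_of_zero] at h3
      rw [hlx]
      exact ⟨h3, hlx, HasWalk.refl _ _⟩
    | succ m ih =>
      intro x hx hhx
      obtain ⟨h1, h2, h3⟩ := hpar x _ hx hhx
      have hlx : l x = l (par x) := by
        simp [l, hhx, h2, Function.iterate_succ_apply]
      obtain ⟨i1, i2, i3⟩ := ih (par x) h1 h2
      rw [hlx]
      refine ⟨i1, i2, i3.snoc ⟨h3, ?_, hlx⟩⟩
      intro he
      simp only at he
      rw [he, hu] at h2
      omega
  refine ⟨l, fun x hxu n hn => ?_⟩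
  have hw := hmem x n hn
  have hxn := hle x n hn
  rcases hk : h x with _ | m
  · rw [hk] at hw
    exact absurd hw.eq_of_zero hxu
  · rw [hk] at hw
    exact ⟨m, by omega, key m x hw hk⟩

theorem steinerF_le {V : Type*} [Fintype V] (w : V → V → ℝ≥0)
    {S : Finset V} {u : V} {d : ℕ} (A : Finset (V × V)) (hA : Covers (↑A) (↑S) u d) :
    steinerF w S u d ≤ ∑ a ∈ A, w a.1 a.2 :=
  csInf_le' ⟨A, hA, rfl⟩

/-- The minimum is attained, unless no arc set covers; the full one does for `d ≥ 1`. -/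
theorem exists_steinerF {V : Type*} [Fintype V] (w : V → V → ℝ≥0)
    (S : Finset V) (u : V) (d : ℕ) (hd : 1 ≤ d) :
    ∃ A : Finset (V × V), Covers (↑A) (↑S) u d ∧ steinerF w S u d = ∑ a ∈ A, w a.1 a.2 := by
  have hne : {c : ℝ≥0 | ∃ A : Finset (V × V), Covers (↑A) (↑S) u d ∧
      c = ∑ a ∈ A, w a.1 a.2}.Nonempty :=
    ⟨_, Finset.univ, fun v _ => ⟨1, hd, fun i => if i = 0 then u else v, by simp, by simp,
      by simp⟩, rfl⟩
  have hfin : {c : ℝ≥0 | ∃ A : Finset (V × V), Covers (↑A) (↑S) u d ∧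
      c = ∑ a ∈ A, w a.1 a.2}.Finite := by
    refine (Set.finite_range fun A : Finset (V × V) => ∑ a ∈ A, w a.1 a.2).subset ?_
    rintro c ⟨A, -, rfl⟩
    exact ⟨A, rfl⟩
  exact hne.csInf_mem hfin

/-- The dynamic-programming recurrence for the diameter-constrained directed Steiner tree:
for `d ≥ 2` and nonempty `S ⊆ T`,
`f(S,u,d) = min ( min_{v ∈ V} (w(u,v) + f(S∖{u},v,d-1)),
                  min_{∅ ≠ S' ⊊ S} (f(S',u,d) + f(S∖S',u,d)) )`. -/
theorem diameter_constrained_steiner_DP_recurrence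
    {V : Type*} [Fintype V] [DecidableEq V] [Nonempty V]
    (w : V → V → ℝ≥0) (hw : ∀ x, w x x = 0)
    (u : V) (d : ℕ) (hd : 2 ≤ d) (S : Finset V) (hS : S.Nonempty) :
    steinerF w S u d =
      sInf ((Set.range fun v : V => w u v + steinerF w (S.erase u) v (d - 1)) ∪
        {x : ℝ≥0 | ∃ S' : Finset V, S'.Nonempty ∧ S' ⊂ S ∧
          x = steinerF w S' u d + steinerF w (S \ S') u d}) := by
  classical
  apply le_antisymm
  · apply le_csInf
    · obtain ⟨v⟩ := ‹Nonempty V›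
      exact ⟨_, Or.inl ⟨v, rfl⟩⟩
    · rintro x (⟨v, rfl⟩ | ⟨S', -, hS', rfl⟩)
      · obtain ⟨A, hA, hs⟩ := exists_steinerF w (S.erase u) v (d - 1) (by omega)
        simp only [hs]
        refine (steinerF_le w (insert (u, v) A) ?_).trans ?_
        · intro x hx
          by_cases hxu : x = u
          · subst hxu
            exact ⟨0, by omega, HasWalk.refl _ _⟩
          · obtain ⟨n, hn, hp⟩ := hA x (by simpa [hxu] using hx)
            have hp' : HasWalk (↑A) v n x := hp
            exact ⟨n + 1, by omega, HasWalk.cons (v := v) (by simp) (hp'.mono (by simp))⟩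
        · by_cases hm : (u, v) ∈ A
          · rw [Finset.insert_eq_of_mem hm]
            exact le_add_of_nonneg_left (by simp)
          · rw [Finset.sum_insert hm]
      · obtain ⟨A, hA, hs⟩ := exists_steinerF w S' u d (by omega)
        obtain ⟨B, hB, ht⟩ := exists_steinerF w (S \ S') u d (by omega)
        rw [hs, ht]
        refine (steinerF_le w (A ∪ B) ?_).trans ?_
        · intro x hx
          by_cases hxS : x ∈ S'
          · obtain ⟨n, hn, hp⟩ := hA x hxS
            exact ⟨n, hn, HasWalk.mono (by simp) hp⟩
          · obtain ⟨n, hn, hp⟩ := hB x (by simpa [hxS] using hx)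
            exact ⟨n, hn, HasWalk.mono (by simp) hp⟩
        · rw [← Finset.sum_union_inter]
          exact le_add_of_nonneg_right (by simp)
  · obtain ⟨A, hA, hs⟩ := exists_steinerF w S u d (by omega)
    rw [hs]
    set R := ((Set.range fun v : V => w u v + steinerF w (S.erase u) v (d - 1)) ∪
        {x : ℝ≥0 | ∃ S' : Finset V, S'.Nonempty ∧ S' ⊂ S ∧
          x = steinerF w S' u d + steinerF w (S \ S') u d}) with hRdef
    have hL : ∀ v, sInf R ≤ w u v + steinerF w (S.erase u) v (d - 1) := fun v =>
      csInf_le' (Or.inl ⟨v, rfl⟩)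
    have hR : ∀ S' : Finset V, S'.Nonempty → S' ⊂ S →
        sInf R ≤ steinerF w S' u d + steinerF w (S \ S') u d := fun S' h1 h2 =>
      csInf_le' (Or.inr ⟨S', h1, h2, rfl⟩)
    by_cases huS : u ∈ S
    · by_cases hSu : S = {u}
      · -- only the root
        refine le_trans (hL u) ?_
        have h0 : steinerF w (S.erase u) u (d - 1) ≤ 0 := by
          refine (steinerF_le w ∅ ?_).trans (by simp)
          intro x hx
          simp [hSu] at hx
        simp only [hw, zero_add]
        exact h0.trans (by simp)
      · refine le_trans (hR {u} (by simp) ?_) ?_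
        · exact Finset.ssubset_iff_subset_ne.mpr ⟨by simpa using huS, fun h => hSu h.symm⟩
        · have h0 : steinerF w {u} u d ≤ 0 := by
            refine (steinerF_le w ∅ ?_).trans (by simp)
            intro x hx
            have : x = u := by simpa using hx
            subst this
            exact ⟨0, by omega, HasWalk.refl _ _⟩
          have h1 : steinerF w (S \ {u}) u d ≤ ∑ a ∈ A, w a.1 a.2 :=
            steinerF_le w A fun x hx => hA x (by
              have : x ∈ S \ {u} := hx
              exact (Finset.mem_sdiff.mp this).1)
          calc _ ≤ 0 + ∑ a ∈ A, w a.1 a.2 := add_le_add h0 h1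
            _ = _ := zero_add _
    · obtain ⟨l, hl⟩ := exists_branch (↑A : Set (V × V)) u
      have hl' : ∀ x ∈ S, ∃ m, m + 1 ≤ d ∧ (u, l x) ∈ A ∧ l (l x) = l x ∧
          HasWalk {a | a ∈ A ∧ a.1 ≠ u ∧ l a.2 = l x} (l x) m x := by
        intro x hx
        obtain ⟨n, hn, hp⟩ := hA x hx
        obtain ⟨m, hm, h1, h2, h3⟩ := hl x (fun h => huS (h ▸ hx)) n hp
        exact ⟨m, by omega, h1, h2, h3⟩
      obtain ⟨s, hsS⟩ := hS
      by_cases hall : ∀ x ∈ S, l x = l s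
      · refine le_trans (hL (l s)) ?_
        obtain ⟨-, -, hus, -, -⟩ := hl' s hsS
        rw [← Finset.add_sum_erase A _ hus]
        refine add_le_add le_rfl (steinerF_le w _ ?_)
        intro x hx
        have hxS : x ∈ S := Finset.mem_of_mem_erase hx
        obtain ⟨m, hm, -, -, h3⟩ := hl' x hxS
        rw [hall x hxS] at h3
        refine ⟨m, by omega, h3.mono ?_⟩
        rintro ⟨a, b⟩ ⟨h1, h2, -⟩
        simp only [Finset.coe_erase, Set.mem_sdiff, Finset.mem_coe, Set.mem_singleton_iff]
        exact ⟨h1, fun h => h2 (Prod.ext_iff.mp h).1⟩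
      · push Not at hall
        obtain ⟨t, htS, hts⟩ := hall
        have hcov : ∀ x ∈ S, ∃ n ≤ d, HasWalk {a | a ∈ A ∧ l a.2 = l x} u n x := by
          intro x hx
          obtain ⟨m, hm, h1, h2, h3⟩ := hl' x hx
          exact ⟨m + 1, hm, HasWalk.cons (A := {a | a ∈ A ∧ l a.2 = l x}) (v := l x) ⟨h1, h2⟩
            (h3.mono (B := {a | a ∈ A ∧ l a.2 = l x}) fun a ha => And.intro ha.1 ha.2.2)⟩
        refine le_trans (hR (S.filter (fun x => l x = l s)) ⟨s, by simp [hsS]⟩ ?_) ?_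
        · refine Finset.ssubset_iff_subset_ne.mpr ⟨Finset.filter_subset _ _, fun h => ?_⟩
          rw [← h] at htS
          exact hts (Finset.mem_filter.mp htS).2
        · rw [← Finset.sum_filter_add_sum_filter_not A (fun a => l a.2 = l s)]
          refine add_le_add (steinerF_le w _ ?_) (steinerF_le w _ ?_)
          · intro x hx
            obtain ⟨hxS, hxl⟩ := Finset.mem_filter.mp (Finset.mem_coe.mp hx)
            obtain ⟨n, hn, hp⟩ := hcov x hxS
            refine ⟨n, hn, hp.mono ?_⟩
            rintro a ⟨h1, h2⟩
            exact Finset.mem_coe.mpr (Finset.mem_filter.mpr ⟨h1, h2.trans hxl⟩)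
          · intro x hx
            obtain ⟨hxS, hxl⟩ := Finset.mem_sdiff.mp (Finset.mem_coe.mp hx)
            obtain ⟨n, hn, hp⟩ := hcov x hxS
            refine ⟨n, hn, hp.mono ?_⟩
            rintro a ⟨h1, h2⟩
            exact Finset.mem_coe.mpr (Finset.mem_filter.mpr ⟨h1, fun h =>
              hxl (Finset.mem_filter.mpr ⟨hxS, h2.symm.trans h⟩)⟩)
end

section
/- Let H be a tree whose set P of internal vertices is nonempty with |P| ≤ α, let β ≥ 1, and let N be a finite set of vertices disjoint from V(H) with |N| = α·β. Then there exists a tree H'' on vertex set V(H) ∪ N that contains H as a subgraph, in which every vertex of N is a leaf adjacent to some vertex of P, every vertex of P has degree at least β in H'', and the set of leaves of H'' is exactly (leaves of H) ∪ N. -/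
/-- The graph `H` with a pendant vertex `n` attached at `f n` for each `n : N`. -/
def attachGraph {V N : Type*} (H : SimpleGraph V) (f : N → V) : SimpleGraph (V ⊕ N) where
  Adj x y := match x, y with
    | Sum.inl a, Sum.inl b => H.Adj a b
    | Sum.inl a, Sum.inr n => f n = a
    | Sum.inr n, Sum.inl a => f n = a
    | Sum.inr _, Sum.inr _ => False
  symm := ⟨by
    rintro (a | n) (b | m) h
    · exact SimpleGraph.Adj.symm h
    · exact h
    · exact h
    · exact h⟩
  loopless := ⟨by
    rintro (a | n) h
    · exact H.loopless.irrefl a h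
    · exact h⟩

theorem attachGraph_isTree {V N : Type*} [Fintype V] [Fintype N] (H : SimpleGraph V)
    (hH : H.IsTree) (f : N → V) : (attachGraph H f).IsTree := by
  classical
  have hconn : (attachGraph H f).Connected := by
    let φ : H →g attachGraph H f := ⟨Sum.inl, fun h => h⟩
    obtain ⟨v₀⟩ := hH.1.nonempty
    have key : ∀ x, (attachGraph H f).Reachable x (Sum.inl v₀) := by
      rintro (a | n)
      · exact (hH.1.preconnected a v₀).map φ
      · have h1 : (attachGraph H f).Adj (Sum.inr n) (Sum.inl (f n)) := rfl
        exact h1.reachable.trans ((hH.1.preconnected (f n) v₀).map φ)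
    haveI : Nonempty (V ⊕ N) := ⟨Sum.inl v₀⟩
    exact ⟨fun x y => (key x).trans (key y).symm⟩
  rw [SimpleGraph.isTree_iff_connected_and_card]
  refine ⟨hconn, le_antisymm ?_ hconn.card_vert_le_card_edgeSet_add_one⟩
  have hsub : (attachGraph H f).edgeSet ⊆
      (Sym2.map Sum.inl '' H.edgeSet) ∪ Set.range (fun n : N => s(Sum.inr n, Sum.inl (f n))) := by
    intro e
    induction e using Sym2.ind with
    | _ x y =>
      rw [SimpleGraph.mem_edgeSet]
      rcases x with a | n <;> rcases y with b | m <;> intro h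
      · exact Or.inl ⟨s(a, b), h, rfl⟩
      · have h' : f m = a := h
        exact Or.inr ⟨m, by simp [h', Sym2.eq_swap]⟩
      · have h' : f n = b := h
        exact Or.inr ⟨n, by simp [h']⟩
      · exact h.elim
  have h1 := (SimpleGraph.isTree_iff_connected_and_card.1 hH).2
  have h2 := (Set.ncard_le_ncard hsub (Set.toFinite _)).trans (Set.ncard_union_le _ _)
  have h3 : (Sym2.map (Sum.inl : V → V ⊕ N) '' H.edgeSet).ncard ≤ H.edgeSet.ncard :=
    Set.ncard_image_le (Set.toFinite _)
  have h4 : (Set.range (fun n : N => (s(Sum.inr n, Sum.inl (f n)) : Sym2 (V ⊕ N)))).ncard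
      ≤ Nat.card N := by
    rw [← Set.image_univ, ← Set.ncard_univ]
    exact Set.ncard_image_le (Set.toFinite _)
  rw [Nat.card_sum]
  simp only [Nat.card_coe_set_eq] at h1 ⊢
  omega

theorem attachGraph_ncard_inl {V N : Type*} [Fintype V] [Fintype N] (H : SimpleGraph V)
    [DecidableRel H.Adj] (f : N → V) (p : V) :
    ((attachGraph H f).neighborSet (Sum.inl p)).ncard = H.degree p + {n | f n = p}.ncard := by
  classical
  have h : (attachGraph H f).neighborSet (Sum.inl p) =
      Sum.inl '' H.neighborSet p ∪ Sum.inr '' {n | f n = p} := by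
    ext (a | n)
    · simp [SimpleGraph.mem_neighborSet, attachGraph]
    · simp [SimpleGraph.mem_neighborSet, attachGraph]
  rw [h, Set.ncard_union_eq _ (Set.toFinite _) (Set.toFinite _),
    Set.ncard_image_of_injective _ Sum.inl_injective,
    Set.ncard_image_of_injective _ Sum.inr_injective]
  · congr 1
    rw [← SimpleGraph.card_neighborSet_eq_degree, ← Nat.card_eq_fintype_card,
      Nat.card_coe_set_eq]
  · rw [Set.disjoint_left]
    rintro _ ⟨a, _, rfl⟩ ⟨b, _, hb⟩
    cases hb

theorem attachGraph_neighborSet_inr {V N : Type*} (H : SimpleGraph V) (f : N → V) (n : N) :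
    (attachGraph H f).neighborSet (Sum.inr n) = {Sum.inl (f n)} := by
  ext (a | m)
  · simp [SimpleGraph.mem_neighborSet, attachGraph, eq_comm]
  · simp [SimpleGraph.mem_neighborSet, attachGraph]

theorem exists_distribution {V N : Type*} [Fintype N] (P : Finset V) (hP : P.Nonempty)
    (α β : ℕ) (hPα : P.card ≤ α) (hN : Fintype.card N = α * β) :
    ∃ f : N → V, (∀ n, f n ∈ P) ∧ ∀ p ∈ P, β ≤ {n | f n = p}.ncard := by
  classical
  have e : N ≃ Fin α × Fin β := Fintype.equivOfCardEq (by simp [hN])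
  obtain ⟨i⟩ : Nonempty (P ↪ Fin α) :=
    Function.Embedding.nonempty_of_card_le (by simpa using hPα)
  haveI : Nonempty P := hP.to_subtype
  let g : Fin α → P := Function.invFun i
  have hg : ∀ p, g (i p) = p := Function.leftInverse_invFun i.injective
  refine ⟨fun n => (g (e n).1 : V), fun n => (g (e n).1).2, fun p hp => ?_⟩
  have hinj : Function.Injective (fun b : Fin β => e.symm (i ⟨p, hp⟩, b)) := by
    intro b c h
    simpa using h
  have hsub : Set.range (fun b : Fin β => e.symm (i ⟨p, hp⟩, b)) ⊆
      {n | (g (e n).1 : V) = p} := by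
    rintro _ ⟨b, rfl⟩
    simp [hg]
  have hc := Set.ncard_le_ncard hsub (Set.toFinite _)
  rwa [← Set.image_univ, Set.ncard_image_of_injective _ hinj, Set.ncard_univ,
    Nat.card_eq_fintype_card, Fintype.card_fin] at hc

/-- Attaching new leaves: given a tree `H` whose set `P` of internal vertices is nonempty
with `|P| ≤ α`, and a disjoint set `N` of `α·β` new vertices (`β ≥ 1`), there is a tree
`H''` on `V(H) ⊕ N` containing `H`, in which each vertex of `N` is a leaf attached to some
internal vertex of `H`, each internal vertex of `H` has degree at least `β`, and the leaves
of `H''` are exactly the leaves of `H` together with `N`. -/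
theorem attach_leaves_to_internal_vertices
    {V N : Type*} [Fintype V] [Fintype N]
    (H : SimpleGraph V) [DecidableRel H.Adj] (hH : H.IsTree)
    (α β : ℕ) (hβ : 1 ≤ β)
    (hP : (Finset.univ.filter fun v : V => 2 ≤ H.degree v).Nonempty)
    (hPα : (Finset.univ.filter fun v : V => 2 ≤ H.degree v).card ≤ α)
    (hN : Fintype.card N = α * β) :
    ∃ H'' : SimpleGraph (V ⊕ N),
      H''.IsTree ∧
      (∀ x y : V, H.Adj x y → H''.Adj (Sum.inl x) (Sum.inl y)) ∧
      (∀ n : N, ∃ p : V, 2 ≤ H.degree p ∧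
        H''.neighborSet (Sum.inr n) = {Sum.inl p}) ∧
      (∀ p : V, 2 ≤ H.degree p → β ≤ (H''.neighborSet (Sum.inl p)).ncard) ∧
      {x : V ⊕ N | (H''.neighborSet x).ncard = 1} =
        Sum.inl '' {v : V | H.degree v = 1} ∪ Set.range Sum.inr := by
  obtain ⟨f, hfP, hfc⟩ := exists_distribution (N := N) _ hP α β hPα hN
  simp only [Finset.mem_filter, Finset.mem_univ, true_and] at hfP hfc
  refine ⟨attachGraph H f, attachGraph_isTree H hH f, fun x y h => h,
    fun n => ⟨f n, hfP n, attachGraph_neighborSet_inr H f n⟩, fun p hp => ?_, ?_⟩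
  · rw [attachGraph_ncard_inl]
    exact (hfc p hp).trans (Nat.le_add_left _ _)
  · ext (p | n)
    · have hk : H.degree p + {n | f n = p}.ncard = 1 ↔ H.degree p = 1 := by
        by_cases hp : 2 ≤ H.degree p
        · omega
        · have h0 : {n | f n = p} = ∅ := by
            ext n
            simp only [Set.mem_setOf_eq, Set.mem_empty_iff_false, iff_false]
            rintro rfl
            exact hp (hfP n)
          rw [h0, Set.ncard_empty, add_zero]
      rw [Set.mem_setOf_eq, attachGraph_ncard_inl, hk]
      simp
    · simp [attachGraph_neighborSet_inr]
end

section
/- Let a, b, c be affinely independent points of the Euclidean plane such that each of the angles ∠bac, ∠abc, ∠acb is strictly less than 2π/3. Then there exists a point s with ∠asb = ∠bsc = ∠csa = 2π/3, and this point satisfies dist(s,a) + dist(s,b) + dist(s,c) ≤ dist(x,a) + dist(x,b) + dist(x,c) for every point x of the plane. -/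
open EuclideanGeometry Real

/-- Elementary quadratic upper bound of the norm near a nonzero vector. -/
lemma fp_norm_bound (p d : EuclideanSpace ℝ (Fin 2)) (hp : p ≠ 0) (t : ℝ) :
    ‖p - t • d‖ ≤ ‖p‖ - t * inner ℝ (‖p‖⁻¹ • p) d + t ^ 2 * (‖d‖ ^ 2 / (2 * ‖p‖)) := by
  have hp' : 0 < ‖p‖ := norm_pos_iff.mpr hp
  have h1 : ‖p - t • d‖ ^ 2 = ‖p‖ ^ 2 - 2 * (t * inner ℝ p d) + t ^ 2 * ‖d‖ ^ 2 := by
    rw [norm_sub_sq_real, inner_smul_right, norm_smul, mul_pow, Real.norm_eq_abs, sq_abs]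
  have h2 : ‖p - t • d‖ ≤ (‖p - t • d‖ ^ 2 + ‖p‖ ^ 2) / (2 * ‖p‖) := by
    rw [le_div_iff₀ (by positivity)]
    nlinarith [sq_nonneg (‖p - t • d‖ - ‖p‖)]
  refine h2.trans (le_of_eq ?_)
  rw [h1, real_inner_smul_left]
  field_simp
  ring

/-- A quadratic that is nonnegative for small positive parameters has nonnegative slope. -/
lemma fp_slope (A K : ℝ) (h : ∀ t : ℝ, 0 < t → 0 ≤ t * A + t ^ 2 * K) : 0 ≤ A := by
  by_contra hA
  push Not at hA
  have hK : 0 < |K| + 1 := by positivity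
  have ht : 0 < -A / (2 * (|K| + 1)) := div_pos (by linarith) (by linarith)
  have h1 := h _ ht
  set t := -A / (2 * (|K| + 1)) with htd
  have h2 : t * (2 * (|K| + 1)) = -A := by rw [htd]; field_simp
  have h3 : 0 ≤ A + t * K := by
    by_contra h4
    push Not at h4
    nlinarith [mul_pos_of_neg_of_neg h4 (neg_lt_zero.mpr ht)]
  nlinarith [mul_le_mul_of_nonneg_left (le_abs_self K) ht.le]

lemma fp_norm_unit (p : EuclideanSpace ℝ (Fin 2)) (hp : p ≠ 0) : ‖‖p‖⁻¹ • p‖ = 1 := by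
  have hp' : 0 < ‖p‖ := norm_pos_iff.mpr hp
  rw [norm_smul, norm_inv, norm_norm, inv_mul_cancel₀ hp'.ne']

lemma fp_cos : Real.cos (2 * π / 3) = -1 / 2 := by
  have : 2 * π / 3 = π - π / 3 := by ring
  rw [this, Real.cos_pi_sub, Real.cos_pi_div_three]
  norm_num

lemma fp_inner_eq (a s b : EuclideanSpace ℝ (Fin 2)) :
    inner ℝ (‖a - s‖⁻¹ • (a - s)) (‖b - s‖⁻¹ • (b - s)) = Real.cos (∠ a s b) := by
  rw [EuclideanGeometry.angle, InnerProductGeometry.cos_angle, real_inner_smul_left,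
    inner_smul_right, vsub_eq_sub, vsub_eq_sub]
  rw [div_eq_mul_inv, mul_inv]
  ring

/-- A vertex with angle less than `2π/3` is not a minimizer. -/
lemma fp_vertex (a b c : EuclideanSpace ℝ (Fin 2)) (hb : b ≠ a) (hc : c ≠ a)
    (hA : ∠ b a c < 2 * π / 3)
    (hmin : ∀ x : EuclideanSpace ℝ (Fin 2),
      dist a b + dist a c ≤ dist x a + dist x b + dist x c) : False := by
  have hb' : b - a ≠ 0 := sub_ne_zero.mpr hb
  have hc' : c - a ≠ 0 := sub_ne_zero.mpr hc
  have hcos : -1 / 2 < Real.cos (∠ b a c) := by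
    rw [← fp_cos]
    exact Real.cos_lt_cos_of_nonneg_of_le_pi (EuclideanGeometry.angle_nonneg _ _ _)
      (by linarith [Real.pi_pos]) hA
  rw [← fp_inner_eq] at hcos
  have hu := fp_norm_unit _ hb'
  have hv := fp_norm_unit _ hc'
  have hbd := fp_norm_bound (b - a)
  have hcd := fp_norm_bound (c - a)
  set u := ‖b - a‖⁻¹ • (b - a)
  set v := ‖c - a‖⁻¹ • (c - a)
  have hd : ‖u + v‖ ^ 2 = 2 + 2 * inner ℝ u v := by
    rw [norm_add_sq_real, hu, hv]; ring
  have hd' : inner ℝ u (u + v) + inner ℝ v (u + v) = ‖u + v‖ ^ 2 := by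
    rw [← inner_add_left, real_inner_self_eq_norm_sq]
  have hgt : 1 < ‖u + v‖ := by
    by_contra h
    push Not at h
    nlinarith [norm_nonneg (u + v)]
  have := fp_slope (‖u + v‖ - ‖u + v‖ ^ 2)
    (‖u + v‖ ^ 2 / (2 * ‖b - a‖) + ‖u + v‖ ^ 2 / (2 * ‖c - a‖)) (by
      intro t ht
      have h := hmin (a + t • (u + v))
      have e1 : dist (a + t • (u + v)) a = t * ‖u + v‖ := by
        rw [dist_eq_norm, add_sub_cancel_left, norm_smul, Real.norm_eq_abs, abs_of_pos ht]
      have e2 : ∀ q, dist (a + t • (u + v)) q = ‖(q - a) - t • (u + v)‖ := by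
        intro q
        rw [dist_comm, dist_eq_norm, sub_sub]
      have e3 : ∀ q, dist a q = ‖q - a‖ := fun q => by rw [dist_comm, dist_eq_norm]
      rw [e1, e2, e2, e3, e3] at h
      have h1 := hbd (u + v) hb' t
      have h2 := hcd (u + v) hc' t
      have h3 := congrArg (fun z => t * z) hd'
      linarith)
  nlinarith

lemma fp_unit_inner (u v w : EuclideanSpace ℝ (Fin 2)) (hu : ‖u‖ = 1) (hv : ‖v‖ = 1)
    (hw : ‖w‖ = 1) (h : u + v + w = 0) : inner ℝ u v = -1 / 2 := by
  have h1 : u + v = -w := eq_neg_of_add_eq_zero_left h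
  have h2 := norm_add_sq_real u v
  rw [h1, norm_neg, hu, hv, hw] at h2
  linarith

lemma fp_angle (a s b : EuclideanSpace ℝ (Fin 2))
    (h : inner ℝ (‖a - s‖⁻¹ • (a - s)) (‖b - s‖⁻¹ • (b - s)) = -1 / 2) :
    ∠ a s b = 2 * π / 3 := by
  rw [fp_inner_eq, ← fp_cos] at h
  exact Real.injOn_cos ⟨EuclideanGeometry.angle_nonneg _ _ _, EuclideanGeometry.angle_le_pi _ _ _⟩
    ⟨by positivity, by linarith [Real.pi_pos]⟩ h

/-- At an interior minimizer the three unit vectors sum to zero. -/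
lemma fp_critical (a b c s : EuclideanSpace ℝ (Fin 2)) (ha : a - s ≠ 0) (hb : b - s ≠ 0)
    (hc : c - s ≠ 0)
    (hmin : ∀ x : EuclideanSpace ℝ (Fin 2),
      dist s a + dist s b + dist s c ≤ dist x a + dist x b + dist x c) :
    ‖a - s‖⁻¹ • (a - s) + ‖b - s‖⁻¹ • (b - s) + ‖c - s‖⁻¹ • (c - s) = 0 := by
  have had := fp_norm_bound (a - s)
  have hbd := fp_norm_bound (b - s)
  have hcd := fp_norm_bound (c - s)
  set u := ‖a - s‖⁻¹ • (a - s)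
  set v := ‖b - s‖⁻¹ • (b - s)
  set w := ‖c - s‖⁻¹ • (c - s)
  set d := u + v + w with hdd
  have hd' : inner ℝ u d + inner ℝ v d + inner ℝ w d = ‖d‖ ^ 2 := by
    rw [← inner_add_left, ← inner_add_left, ← hdd, real_inner_self_eq_norm_sq]
  have := fp_slope (- ‖d‖ ^ 2)
    (‖d‖ ^ 2 / (2 * ‖a - s‖) + ‖d‖ ^ 2 / (2 * ‖b - s‖) + ‖d‖ ^ 2 / (2 * ‖c - s‖)) (by
      intro t ht
      have h := hmin (s + t • d)
      have e2 : ∀ q, dist (s + t • d) q = ‖(q - s) - t • d‖ := by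
        intro q
        rw [dist_comm, dist_eq_norm, sub_sub]
      have e3 : ∀ q, dist s q = ‖q - s‖ := fun q => by rw [dist_comm, dist_eq_norm]
      rw [e2, e2, e2, e3, e3, e3] at h
      have h0 := had d ha t
      have h1 := hbd d hb t
      have h2 := hcd d hc t
      have h3 := congrArg (fun z => t * z) hd'
      linarith)
  have h0 : ‖d‖ = 0 := by nlinarith [norm_nonneg d]
  exact norm_eq_zero.mp h0

lemma fp_exists (a b c : EuclideanSpace ℝ (Fin 2)) :
    ∃ s : EuclideanSpace ℝ (Fin 2), ∀ x : EuclideanSpace ℝ (Fin 2),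
      dist s a + dist s b + dist s c ≤ dist x a + dist x b + dist x c := by
  have hcont : Continuous fun x : EuclideanSpace ℝ (Fin 2) =>
      dist x a + dist x b + dist x c := by fun_prop
  apply hcont.exists_forall_le
  refine Filter.tendsto_atTop_mono (fun x => ?_) (tendsto_dist_right_cocompact_atTop a)
  linarith [dist_nonneg (x := x) (y := b), dist_nonneg (x := x) (y := c)]

/-- If all angles of a (nondegenerate) triangle `abc` in the Euclidean plane are strictly
less than `2π/3`, then there is a point `s` at which the three vertices subtend pairwise
angles of exactly `2π/3`, and this Fermat point minimizes the total distance to the three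
vertices. -/
theorem fermat_point_of_small_angles
    (a b c : EuclideanSpace ℝ (Fin 2))
    (hind : AffineIndependent ℝ ![a, b, c])
    (hA : ∠ b a c < 2 * π / 3)
    (hB : ∠ a b c < 2 * π / 3)
    (hC : ∠ a c b < 2 * π / 3) :
    ∃ s : EuclideanSpace ℝ (Fin 2),
      ∠ a s b = 2 * π / 3 ∧ ∠ b s c = 2 * π / 3 ∧ ∠ c s a = 2 * π / 3 ∧
      ∀ x : EuclideanSpace ℝ (Fin 2),
        dist s a + dist s b + dist s c ≤ dist x a + dist x b + dist x c := by
  have hab : a ≠ b := by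
    intro h
    have := hind.injective (a₁ := 0) (a₂ := 1) (by simpa using h)
    simp at this
  have hac : a ≠ c := by
    intro h
    have := hind.injective (a₁ := 0) (a₂ := 2) (by simpa using h)
    simp at this
  have hbc : b ≠ c := by
    intro h
    have := hind.injective (a₁ := 1) (a₂ := 2) (by simpa using h)
    simp at this
  obtain ⟨s, hs⟩ := fp_exists a b c
  have ha : a - s ≠ 0 := by
    intro h
    obtain rfl := sub_eq_zero.mp h
    refine fp_vertex a b c hab.symm hac.symm hA (fun x => ?_)
    have := hs x
    rw [dist_self] at this
    linarith
  have hb : b - s ≠ 0 := by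
    intro h
    obtain rfl := sub_eq_zero.mp h
    refine fp_vertex b a c hab hbc.symm hB (fun x => ?_)
    have := hs x
    rw [dist_self] at this
    linarith
  have hc : c - s ≠ 0 := by
    intro h
    obtain rfl := sub_eq_zero.mp h
    refine fp_vertex c a b hac hbc hC (fun x => ?_)
    have := hs x
    rw [dist_self] at this
    linarith
  have hsum := fp_critical a b c s ha hb hc hs
  have hu := fp_norm_unit _ ha
  have hv := fp_norm_unit _ hb
  have hw := fp_norm_unit _ hc
  refine ⟨s, fp_angle _ _ _ (fp_unit_inner _ _ _ hu hv hw hsum),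
    fp_angle _ _ _ (fp_unit_inner _ _ _ hv hw hu ?_),
    fp_angle _ _ _ (fp_unit_inner _ _ _ hw hu hv ?_), hs⟩
  · rw [← hsum]; abel
  · rw [← hsum]; abel
end

section
/- Let a, b, c be points of the Euclidean plane with b ≠ a and c ≠ a, and suppose ∠bac ≥ 2π/3. Then for every point x of the plane, dist(a,b) + dist(a,c) ≤ dist(x,a) + dist(x,b) + dist(x,c); that is, the vertex a itself minimizes the total distance to a, b and c. -/
open EuclideanGeometry Real

/-- If the angle of a triangle `abc` at the vertex `a` is at least `2π/3`, then `a` itself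
minimizes the total distance to the three vertices `a`, `b`, `c` (it is the Fermat point). -/
theorem fermat_point_at_wide_vertex
    (a b c : EuclideanSpace ℝ (Fin 2))
    (hb : b ≠ a) (hc : c ≠ a)
    (hA : 2 * π / 3 ≤ ∠ b a c) :
    ∀ x : EuclideanSpace ℝ (Fin 2),
      dist a b + dist a c ≤ dist x a + dist x b + dist x c := by
  intro x
  have key : ∀ u v y : EuclideanSpace ℝ (Fin 2), u ≠ 0 → v ≠ 0 →
      2 * π / 3 ≤ InnerProductGeometry.angle u v →
      ‖u‖ + ‖v‖ ≤ ‖y‖ + ‖u - y‖ + ‖v - y‖ := by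
    intro u v y hu hv h
    have hu' : 0 < ‖u‖ := norm_pos_iff.mpr hu
    have hv' : 0 < ‖v‖ := norm_pos_iff.mpr hv
    have hcos : Real.cos (InnerProductGeometry.angle u v) ≤ -(1 / 2) := by
      have h1 : Real.cos (2 * π / 3) = -(1 / 2) := by
        rw [show 2 * π / 3 = π - π / 3 by ring, Real.cos_pi_sub, Real.cos_pi_div_three]
      rw [← h1]
      exact Real.cos_le_cos_of_nonneg_of_le_pi (by positivity)
        (InnerProductGeometry.angle_le_pi u v) h
    rw [InnerProductGeometry.cos_angle] at hcos
    obtain ⟨e, he⟩ : ∃ e, e = ‖u‖⁻¹ • u := ⟨_, rfl⟩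
    obtain ⟨f, hf⟩ : ∃ f, f = ‖v‖⁻¹ • v := ⟨_, rfl⟩
    have hen : ‖e‖ = 1 := by
      rw [he, norm_smul, norm_inv, norm_norm, inv_mul_cancel₀ hu'.ne']
    have hfn : ‖f‖ = 1 := by
      rw [hf, norm_smul, norm_inv, norm_norm, inv_mul_cancel₀ hv'.ne']
    have hef : inner ℝ e f ≤ -(1 / 2) := by
      rw [he, hf, real_inner_smul_left, real_inner_smul_right]
      refine le_trans (le_of_eq ?_) hcos
      field_simp
    have hue : inner ℝ u e = ‖u‖ := by
      rw [he, real_inner_smul_right, real_inner_self_eq_norm_sq]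
      field_simp
    have hvf : inner ℝ v f = ‖v‖ := by
      rw [hf, real_inner_smul_right, real_inner_self_eq_norm_sq]
      field_simp
    have hs : ‖e + f‖ ≤ 1 := by
      have := norm_add_sq_real e f
      rw [hen, hfn] at this
      nlinarith [norm_nonneg (e + f)]
    have h1 := real_inner_le_norm (u - y) e
    have h2 := real_inner_le_norm (v - y) f
    have h3 := real_inner_le_norm y (e + f)
    rw [inner_sub_left, hue, hen] at h1
    rw [inner_sub_left, hvf, hfn] at h2
    rw [inner_add_right] at h3
    have h4 : ‖y‖ * ‖e + f‖ ≤ ‖y‖ := mul_le_of_le_one_right (norm_nonneg _) hs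
    linarith
  have := key (b - a) (c - a) (x - a) (sub_ne_zero.mpr hb) (sub_ne_zero.mpr hc) hA
  rw [sub_sub_sub_cancel_right, sub_sub_sub_cancel_right] at this
  rw [dist_comm a b, dist_comm a c, dist_comm x b, dist_comm x c]
  simpa only [dist_eq_norm] using this
end

section
/- Let a, b, c, s be points of the Euclidean plane with a ≠ b, s ∉ {a, b, c}, and ∠asb = ∠bsc = ∠csa = 2π/3. Let d be a point with dist(d,a) = dist(d,b) = dist(a,b) (so that the triangle abd is equilateral) such that c and d lie strictly on opposite sides of the line through a and b. Then dist(c,d) = dist(s,a) + dist(s,b) + dist(s,c). -/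
open EuclideanGeometry Real

lemma melzak_normsq {E : Type*} [NormedAddCommGroup E] [InnerProductSpace ℝ E] (U V : E)
    (hU : ‖U‖ = 1) (hV : ‖V‖ = 1) (hUV : inner ℝ U V = -1/2) (p q : ℝ) :
    ‖p • U + q • V‖ ^ 2 = p ^ 2 - p * q + q ^ 2 := by
  rw [norm_add_sq_real, norm_smul, norm_smul, hU, hV, inner_smul_left, inner_smul_right, hUV]
  simp
  ring

lemma melzak_angle {E : Type*} [NormedAddCommGroup E] [InnerProductSpace ℝ E] (u v : E)
    (hu : u ≠ 0) (hv : v ≠ 0) (h : InnerProductGeometry.angle u v = 2 * π / 3) :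
    inner ℝ (‖u‖⁻¹ • u) (‖v‖⁻¹ • v) = -1/2 := by
  have h1 := InnerProductGeometry.cos_angle u v
  have h2 : Real.cos (2 * π / 3) = -1/2 := by
    rw [show 2 * π / 3 = π - π / 3 by ring, Real.cos_pi_sub, Real.cos_pi_div_three]; norm_num
  rw [h, h2] at h1
  have := norm_ne_zero_iff.2 hu
  have := norm_ne_zero_iff.2 hv
  rw [inner_smul_left, inner_smul_right, h1]
  simp
  field_simp

lemma melzak_alg (x y p q : ℝ) (hx : 0 < x) (hy : 0 < y)
    (h1 : (p - x) ^ 2 - (p - x) * q + q ^ 2 = x ^ 2 + x * y + y ^ 2)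
    (h2 : p ^ 2 - p * (q - y) + (q - y) ^ 2 = x ^ 2 + x * y + y ^ 2)
    (h : x * y < p * y + q * x) : p = x + y ∧ q = x + y := by
  obtain ⟨t, ht⟩ : ∃ t, p = x + y + t * (2 * y + x) :=
    ⟨(p - x - y) / (2 * y + x), by field_simp; ring⟩
  have hq : q = x + y + t * (2 * x + y) := by
    have h3 : (q - (x + y + t * (2 * x + y))) * (2 * y + x) = 0 := by
      subst ht; linear_combination h1 - h2
    rcases mul_eq_zero.1 h3 with h3 | h3
    · linarith
    · nlinarith
  subst ht hq
  have hK : 0 < x ^ 2 + x * y + y ^ 2 := by positivity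
  have h4 : (t * (t + 1)) * (x ^ 2 + x * y + y ^ 2) = 0 := by
    linear_combination h1 / 3
  rcases mul_eq_zero.1 h4 with h4 | h4
  · rcases mul_eq_zero.1 h4 with h4 | h4
    · subst h4; simp
    · obtain rfl : t = -1 := by linarith
      nlinarith [mul_pos hx hy]
  · linarith

/-- Melzak's identity: if the edges from a Steiner junction `s` to `a`, `b`, `c` pairwise
subtend angles of `2π/3`, and `d` is the apex of the equilateral triangle erected on `ab`
on the side opposite to `c`, then `dist c d = dist s a + dist s b + dist s c`. -/
theorem melzak_equilateral_identity
    (a b c s d : EuclideanSpace ℝ (Fin 2))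
    (hab : a ≠ b)
    (hs : s ∉ ({a, b, c} : Set (EuclideanSpace ℝ (Fin 2))))
    (hasb : ∠ a s b = 2 * π / 3)
    (hbsc : ∠ b s c = 2 * π / 3)
    (hcsa : ∠ c s a = 2 * π / 3)
    (hda : dist d a = dist a b) (hdb : dist d b = dist a b)
    (hside : (affineSpan ℝ ({a, b} : Set (EuclideanSpace ℝ (Fin 2)))).SOppSide c d) :
    dist c d = dist s a + dist s b + dist s c := by
  simp only [Set.mem_insert_iff, Set.mem_singleton_iff, not_or] at hs
  obtain ⟨hsa, hsb, hsc⟩ := hs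
  have ha0 : a - s ≠ 0 := sub_ne_zero.2 (Ne.symm hsa)
  have hb0 : b - s ≠ 0 := sub_ne_zero.2 (Ne.symm hsb)
  have hc0 : c - s ≠ 0 := sub_ne_zero.2 (Ne.symm hsc)
  have i1 := melzak_angle _ _ ha0 hb0 hasb
  have i2 := melzak_angle _ _ hb0 hc0 hbsc
  have i3 := melzak_angle _ _ hc0 ha0 hcsa
  rw [dist_comm s a, dist_comm s b, dist_comm s c, dist_eq_norm a s, dist_eq_norm b s,
    dist_eq_norm c s]
  have nU : ‖‖a - s‖⁻¹ • (a - s)‖ = 1 := norm_smul_inv_norm (𝕜 := ℝ) ha0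
  have nV : ‖‖b - s‖⁻¹ • (b - s)‖ = 1 := norm_smul_inv_norm (𝕜 := ℝ) hb0
  have nW : ‖‖c - s‖⁻¹ • (c - s)‖ = 1 := norm_smul_inv_norm (𝕜 := ℝ) hc0
  have hx := norm_pos_iff.2 ha0
  have hy := norm_pos_iff.2 hb0
  have hz := norm_pos_iff.2 hc0
  have eU : a = s + ‖a - s‖ • (‖a - s‖⁻¹ • (a - s)) := by
    rw [smul_inv_smul₀ hx.ne']; abel
  have eV : b = s + ‖b - s‖ • (‖b - s‖⁻¹ • (b - s)) := by
    rw [smul_inv_smul₀ hy.ne']; abel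
  have eW : c = s + ‖c - s‖ • (‖c - s‖⁻¹ • (c - s)) := by
    rw [smul_inv_smul₀ hz.ne']; abel
  generalize ‖a - s‖⁻¹ • (a - s) = U at *
  generalize ‖b - s‖⁻¹ • (b - s) = V at *
  generalize ‖c - s‖⁻¹ • (c - s) = W at *
  generalize ‖a - s‖ = x at *
  generalize ‖b - s‖ = y at *
  generalize ‖c - s‖ = z at *
  have hW : W = -(U + V) := by
    have : ‖U + V + W‖ ^ 2 = 0 := by
      rw [norm_add_sq_real, norm_add_sq_real, inner_add_left, nU, nV, nW, i1, i2,
        real_inner_comm, i3]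
      norm_num
    have h0 : U + V + W = 0 := by simpa using this
    exact eq_neg_of_add_eq_zero_right h0
  obtain ⟨m, hm, hmb⟩ := hside.exists_sbtw
  obtain ⟨r, rfl⟩ := mem_affineSpan_pair_iff_exists_lineMap_eq.1 hm
  obtain ⟨⟨t, ⟨ht0, ht1⟩, ht⟩, hne1, hne2⟩ := hmb
  have ht0' : t ≠ 0 := by rintro rfl; simp at ht; exact hne1 ht.symm
  have ht1' : t ≠ 1 := by rintro rfl; simp at ht; exact hne2 ht.symm
  have htp : 0 < t := lt_of_le_of_ne ht0 (Ne.symm ht0')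
  have htl : t < 1 := lt_of_le_of_ne ht1 ht1'
  rw [AffineMap.lineMap_apply_module, AffineMap.lineMap_apply_module] at ht
  obtain ⟨p, hp⟩ : ∃ p, p = -z + ((1 - r) * x + z) / t := ⟨_, rfl⟩
  obtain ⟨q, hq⟩ : ∃ q, q = -z + (r * y + z) / t := ⟨_, rfl⟩
  have hd : d = s + (p • U + q • V) := by
    have hd' : t • d = t • (s + (p • U + q • V)) := by
      have e1 : t • d = (1 - r) • a + r • b - (1 - t) • c := by rw [← ht]; abel
      have hp' : t * p = -(t * z) + ((1 - r) * x + z) := by rw [hp]; field_simp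
      have hq' : t * q = -(t * z) + (r * y + z) := by rw [hq]; field_simp
      rw [e1, smul_add, smul_add, smul_smul, smul_smul, hp', hq', eU, eV, eW, hW]
      module
    exact smul_right_injective _ ht0' hd'
  have hpq : x * y < p * y + q * x := by
    have : p * y + q * x - x * y = (x * y + z * (x + y)) * (1 - t) / t := by
      rw [hp, hq]; field_simp; ring
    have : 0 < (x * y + z * (x + y)) * (1 - t) / t := by
      have := sub_pos.2 htl
      positivity
    linarith
  have N := melzak_normsq U V nU nV i1
  have dab : dist a b ^ 2 = x ^ 2 + x * y + y ^ 2 := by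
    rw [dist_eq_norm, show a - b = x • U + (-y) • V by rw [eU, eV]; module, N]; ring
  have h1 : (p - x) ^ 2 - (p - x) * q + q ^ 2 = x ^ 2 + x * y + y ^ 2 := by
    rw [← dab, ← hda, dist_eq_norm, show d - a = (p - x) • U + q • V by rw [hd, eU]; module, N]
  have h2 : p ^ 2 - p * (q - y) + (q - y) ^ 2 = x ^ 2 + x * y + y ^ 2 := by
    rw [← dab, ← hdb, dist_eq_norm, show d - b = p • U + (q - y) • V by rw [hd, eV]; module, N]
  obtain ⟨hp2, hq2⟩ := melzak_alg x y p q hx hy h1 h2 hpq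
  have hfin : dist c d ^ 2 = (x + y + z) ^ 2 := by
    rw [dist_eq_norm, show c - d = (-(x + y + z)) • U + (-(x + y + z)) • V by
      rw [hd, eW, hW, hp2, hq2]; module, N]
    ring
  exact (pow_left_inj₀ dist_nonneg (by positivity) two_ne_zero).1 hfin
end
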